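/- Suppose λ_i = 1 for all i (i.e. Λ = I). Then for every initial condition y(0) ∈ ℝ^n there exists α ∈ ℝ such that both y(t) and ŷ(t) converge to the consensus vector α·1 exponentially fast as t → ∞. -/

import Mathlib

/-!
The pair `(y, ŷ)` evolves by a single row-stochastic matrix `P` on `Fin n ⊕ Fin n`
(`jointMatrix`). Its `ŷ`-`ŷ` block dominates `(I - Φ) M`, whose support is that of `W`, so the
positivity of `W ^ k` passes to that block of `P ^ k`. By irreducibility and `n ≥ 2`, every agent
`i` has some `l ≠ i` with `W i l > 0`, so both `y i` and `ŷ i` draw on `ŷ l` in one step. Hence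
every column of `P ^ (k + 1)` indexed by an expressed opinion is positive
(`jointMatrix_pow_pos`).

A stochastic matrix having a power with a positive column contracts the oscillation
`max x - min x` by a factor `1 - δ` every `K` steps (Doeblin's condition). The maxima of the
iterates decrease and the minima increase, so they share a limit `α`, which is approached at a
geometric rate (`exists_geometric_consensus`).
-/

open Matrix BigOperators

/-- The diagonal part `W̃` of `W`. -/
noncomputable def diagPart {n : ℕ} (W : Matrix (Fin n) (Fin n) ℝ) :
    Matrix (Fin n) (Fin n) ℝ :=
  Matrix.diagonal (fun i => W i i)

/-- The off-diagonal part `Ŵ` of `W`. -/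
noncomputable def offDiagPart {n : ℕ} (W : Matrix (Fin n) (Fin n) ℝ) :
    Matrix (Fin n) (Fin n) ℝ :=
  W - diagPart W

/-- The trajectories of the opinion dynamics in the fully susceptible case
`Λ = I`: `(opinionsConsensus W M phi y0 t).1 = y(t)` and
`(opinionsConsensus W M phi y0 t).2 = ŷ(t)`, with `ŷ(0) = y(0) = y0`,
`y(t+1) = W̃ y(t) + Ŵ ŷ(t)` and `ŷ(t+1) = Φ y(t+1) + (I − Φ) M ŷ(t)`. -/
noncomputable def opinionsConsensus {n : ℕ} (W M : Matrix (Fin n) (Fin n) ℝ)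
    (phi : Fin n → ℝ) (y0 : Fin n → ℝ) :
    ℕ → (Fin n → ℝ) × (Fin n → ℝ)
  | 0 => (y0, y0)
  | t + 1 =>
      let prev := opinionsConsensus W M phi y0 t
      let ynew := diagPart W *ᵥ prev.1 + offDiagPart W *ᵥ prev.2
      (ynew, Matrix.diagonal phi *ᵥ ynew + ((1 - Matrix.diagonal phi) * M) *ᵥ prev.2)

/-! ### Contraction under Doeblin's condition -/

section Doeblin

variable {ι : Type*} [Fintype ι]

lemma pow_nonneg_of_nonneg [DecidableEq ι] {P : Matrix ι ι ℝ} (hP : ∀ i j, 0 ≤ P i j) (m : ℕ) :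
    ∀ i j, 0 ≤ (P ^ m) i j := by
  induction m with
  | zero =>
    intro i j
    rw [pow_zero, Matrix.one_apply]
    split_ifs <;> norm_num
  | succ m ih =>
    intro i j
    rw [pow_succ', Matrix.mul_apply]
    exact Finset.sum_nonneg fun l _ => mul_nonneg (hP i l) (ih l j)

lemma pow_row_sum [DecidableEq ι] {P : Matrix ι ι ℝ} (hP : ∀ i, ∑ j, P i j = 1) (m : ℕ) :
    ∀ i, ∑ j, (P ^ m) i j = 1 := by
  induction m with
  | zero => intro i; simp [Matrix.one_apply]
  | succ m ih =>
    intro i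
    simp_rw [pow_succ', Matrix.mul_apply]
    rw [Finset.sum_comm]
    simp_rw [← Finset.mul_sum, ih, mul_one, hP]

/-- Averaging with weights that put mass at least `δ` on `j₀` moves a lower bound `a` up towards
`x j₀` by the proportion `δ`. -/
lemma le_mulVec {Q : Matrix ι ι ℝ} (hQ : ∀ i j, 0 ≤ Q i j) (hrow : ∀ i, ∑ j, Q i j = 1)
    {δ : ℝ} {j₀ : ι} (hδ : ∀ i, δ ≤ Q i j₀) {x : ι → ℝ} {a : ℝ} (ha : ∀ j, a ≤ x j) (i : ι) :
    a + δ * (x j₀ - a) ≤ (Q *ᵥ x) i := by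
  have h1 : (Q *ᵥ x) i - a = ∑ j, Q i j * (x j - a) := by
    simp_rw [mul_sub, Finset.sum_sub_distrib, ← Finset.sum_mul, hrow, one_mul]
    rfl
  have h2 : Q i j₀ * (x j₀ - a) ≤ ∑ j, Q i j * (x j - a) :=
    Finset.single_le_sum (f := fun j => Q i j * (x j - a))
      (fun j _ => mul_nonneg (hQ i j) (sub_nonneg.2 (ha j))) (Finset.mem_univ j₀)
  have h3 : δ * (x j₀ - a) ≤ Q i j₀ * (x j₀ - a) :=
    mul_le_mul_of_nonneg_right (hδ i) (sub_nonneg.2 (ha j₀))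
  linarith

lemma mulVec_le {Q : Matrix ι ι ℝ} (hQ : ∀ i j, 0 ≤ Q i j) (hrow : ∀ i, ∑ j, Q i j = 1)
    {δ : ℝ} {j₀ : ι} (hδ : ∀ i, δ ≤ Q i j₀) {x : ι → ℝ} {b : ℝ} (hb : ∀ j, x j ≤ b) (i : ι) :
    (Q *ᵥ x) i ≤ b - δ * (b - x j₀) := by
  have h := le_mulVec hQ hrow hδ (x := -x) (a := -b) (fun j => neg_le_neg (hb j)) i
  rw [Matrix.mulVec_neg] at h
  simp only [Pi.neg_apply] at h
  linarith

/-- Doeblin's theorem: under a stochastic matrix having a power with a positive column, every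
trajectory tends to a constant vector at a geometric rate. -/
lemma exists_geometric_consensus [DecidableEq ι] {P : Matrix ι ι ℝ} (hP : ∀ i j, 0 ≤ P i j)
    (hrow : ∀ i, ∑ j, P i j = 1) {K : ℕ} (hK : 0 < K) {j₀ : ι} (hpos : ∀ i, 0 < (P ^ K) i j₀)
    (z : ℕ → ι → ℝ) (hz : ∀ t, z (t + 1) = P *ᵥ z t) :
    ∃ α C : ℝ, 0 < C ∧ ∃ r : ℝ, r ∈ Set.Ioo (0 : ℝ) 1 ∧ ∀ t i, |z t i - α| ≤ C * r ^ t := by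
  have : Nonempty ι := ⟨j₀⟩
  -- The cap `1 / 2` keeps the contraction factor `1 - δ` positive.
  obtain ⟨δ, hδ0, hδ1, hδ⟩ : ∃ δ : ℝ, 0 < δ ∧ δ < 1 ∧ ∀ i, δ ≤ (P ^ K) i j₀ := by
    obtain ⟨i₁, hi₁⟩ := Finite.exists_min fun i => (P ^ K) i j₀
    exact ⟨min ((P ^ K) i₁ j₀) (1 / 2), lt_min (hpos i₁) (by norm_num),
      (min_le_right _ _).trans_lt (by norm_num), fun i => (min_le_left _ _).trans (hi₁ i)⟩
  have hzm : ∀ m t, z (t + m) = (P ^ m) *ᵥ z t := by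
    intro m t
    induction m with
    | zero => simp
    | succ m ih => rw [← add_assoc, hz, ih, Matrix.mulVec_mulVec, ← pow_succ']
  set a : ℕ → ℝ := fun t => ⨅ i, z t i with ha_def
  set b : ℕ → ℝ := fun t => ⨆ i, z t i with hb_def
  have ha : ∀ t i, a t ≤ z t i := fun t i => ciInf_le (Set.finite_range _).bddBelow i
  have hb : ∀ t i, z t i ≤ b t := fun t i => le_ciSup (Set.finite_range _).bddAbove i
  have ha_mono : Monotone a := monotone_nat_of_le_succ fun t => le_ciInf fun i => by
    have h := le_mulVec hP hrow (δ := 0) (j₀ := j₀) (fun i => hP i j₀) (ha t) i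
    rw [hz]
    linarith
  have hb_anti : Antitone b := antitone_nat_of_succ_le fun t => ciSup_le fun i => by
    have h := mulVec_le hP hrow (δ := 0) (j₀ := j₀) (fun i => hP i j₀) (hb t) i
    rw [hz]
    linarith
  have hab : a ≤ b := fun t => (ha t j₀).trans (hb t j₀)
  have hcontr : ∀ t, b (t + K) - a (t + K) ≤ (1 - δ) * (b t - a t) := by
    intro t
    have h1 : a t + δ * (z t j₀ - a t) ≤ a (t + K) := le_ciInf fun i => by
      rw [hzm]
      exact le_mulVec (pow_nonneg_of_nonneg hP K) (pow_row_sum hrow K) hδ (ha t) i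
    have h2 : b (t + K) ≤ b t - δ * (b t - z t j₀) := ciSup_le fun i => by
      rw [hzm]
      exact mulVec_le (pow_nonneg_of_nonneg hP K) (pow_row_sum hrow K) hδ (hb t) i
    linarith
  have hmem := ha_mono.ciSup_mem_iInter_Icc_of_antitone hb_anti hab
  rw [Set.mem_iInter] at hmem
  set r : ℝ := (1 - δ) ^ ((K : ℝ)⁻¹) with hr_def
  have hr0 : 0 < r := Real.rpow_pos_of_pos (by linarith) _
  have hr1 : r < 1 := Real.rpow_lt_one (by linarith) (by linarith) (by positivity)
  have hrK : r ^ K = 1 - δ := Real.rpow_inv_natCast_pow (by linarith) hK.ne'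
  have hosc0 : 0 ≤ b 0 - a 0 := sub_nonneg.2 (hab 0)
  set C : ℝ := (b 0 - a 0 + 1) / r ^ K with hC_def
  have hC : 0 < C := by positivity
  have hosc : ∀ t, b t - a t ≤ C * r ^ t := by
    intro t
    induction t using Nat.strong_induction_on with
    | _ t ih =>
      rcases lt_or_ge t K with ht | ht
      · have h1 : r ^ K ≤ r ^ t := pow_le_pow_of_le_one hr0.le hr1.le ht.le
        have h2 : C * r ^ K = b 0 - a 0 + 1 := div_mul_cancel₀ _ (by positivity)
        have h3 := mul_le_mul_of_nonneg_left h1 hC.le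
        have h4 := hb_anti (Nat.zero_le t)
        have h5 := ha_mono (Nat.zero_le t)
        linarith
      · obtain ⟨s, rfl⟩ := Nat.exists_eq_add_of_le' ht
        have h1 := mul_le_mul_of_nonneg_left (ih s (by omega)) (sub_pos.2 hδ1).le
        calc b (s + K) - a (s + K) ≤ (1 - δ) * (b s - a s) := hcontr s
          _ ≤ (1 - δ) * (C * r ^ s) := h1
          _ = C * r ^ (s + K) := by rw [pow_add, hrK]; ring
  refine ⟨⨆ t, a t, C, hC, r, ⟨hr0, hr1⟩, fun t i => ?_⟩
  obtain ⟨h1, h2⟩ := hmem t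
  have h3 := ha t i
  have h4 := hb t i
  have h5 := hosc t
  rw [abs_le]
  constructor <;> linarith

end Doeblin

/-! ### The joint dynamics of private and expressed opinions -/

section Joint

variable {n : ℕ}

/-- The one-step matrix of the stacked state `(y, ŷ)`, obtained by substituting the update of `y`
into that of `ŷ`. -/
noncomputable def jointMatrix (W M : Matrix (Fin n) (Fin n) ℝ) (phi : Fin n → ℝ) :
    Matrix (Fin n ⊕ Fin n) (Fin n ⊕ Fin n) ℝ :=
  Matrix.fromBlocks (diagPart W) (offDiagPart W) (Matrix.diagonal phi * diagPart W)
    (Matrix.diagonal phi * offDiagPart W + (1 - Matrix.diagonal phi) * M)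

lemma diagPart_nonneg {W : Matrix (Fin n) (Fin n) ℝ} (hW : ∀ i j, 0 ≤ W i j) (i j : Fin n) :
    0 ≤ diagPart W i j := by
  rw [diagPart, Matrix.diagonal_apply]
  split_ifs
  · exact hW i i
  · exact le_rfl

lemma offDiagPart_apply_of_ne (W : Matrix (Fin n) (Fin n) ℝ) {i j : Fin n} (h : i ≠ j) :
    offDiagPart W i j = W i j := by
  simp [offDiagPart, diagPart, Matrix.diagonal_apply_ne _ h]

lemma offDiagPart_nonneg {W : Matrix (Fin n) (Fin n) ℝ} (hW : ∀ i j, 0 ≤ W i j) (i j : Fin n) :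
    0 ≤ offDiagPart W i j := by
  rcases eq_or_ne i j with rfl | h
  · simp [offDiagPart, diagPart]
  · rw [offDiagPart_apply_of_ne W h]
    exact hW i j

lemma one_sub_diagonal_mul_apply (M : Matrix (Fin n) (Fin n) ℝ) (phi : Fin n → ℝ) (i j : Fin n) :
    ((1 - Matrix.diagonal phi) * M) i j = (1 - phi i) * M i j := by
  rw [sub_mul, one_mul, Matrix.sub_apply, Matrix.diagonal_mul]
  ring

lemma row_sum_parts {W : Matrix (Fin n) (Fin n) ℝ} (hW : ∀ i, ∑ j, W i j = 1) (i : Fin n) :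
    ∑ j, diagPart W i j + ∑ j, offDiagPart W i j = 1 := by
  rw [← Finset.sum_add_distrib, ← hW i]
  exact Finset.sum_congr rfl fun j _ => by simp [offDiagPart]

lemma jointMatrix_nonneg {W M : Matrix (Fin n) (Fin n) ℝ} {phi : Fin n → ℝ}
    (hW : ∀ i j, 0 ≤ W i j) (hM : ∀ i j, 0 ≤ M i j) (hphi : ∀ i, phi i ∈ Set.Ioo (0 : ℝ) 1) :
    ∀ i j, 0 ≤ jointMatrix W M phi i j := by
  have h1 : ∀ i, 0 ≤ 1 - phi i := fun i => sub_nonneg.2 (hphi i).2.le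
  rintro (i | i) (j | j)
  · exact diagPart_nonneg hW i j
  · exact offDiagPart_nonneg hW i j
  · simp only [jointMatrix, Matrix.fromBlocks_apply₂₁, Matrix.diagonal_mul]
    exact mul_nonneg (hphi i).1.le (diagPart_nonneg hW i j)
  · simp only [jointMatrix, Matrix.fromBlocks_apply₂₂, Matrix.add_apply, Matrix.diagonal_mul,
      one_sub_diagonal_mul_apply]
    exact add_nonneg (mul_nonneg (hphi i).1.le (offDiagPart_nonneg hW i j))
      (mul_nonneg (h1 i) (hM i j))

lemma jointMatrix_row_sum {W M : Matrix (Fin n) (Fin n) ℝ} (phi : Fin n → ℝ)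
    (hW : ∀ i, ∑ j, W i j = 1) (hM : ∀ i, ∑ j, M i j = 1) :
    ∀ i, ∑ j, jointMatrix W M phi i j = 1 := by
  rintro (i | i)
  · rw [Fintype.sum_sum_type]
    exact row_sum_parts hW i
  · rw [Fintype.sum_sum_type]
    simp only [jointMatrix, Matrix.fromBlocks_apply₂₁, Matrix.fromBlocks_apply₂₂,
      Matrix.add_apply, Matrix.diagonal_mul, one_sub_diagonal_mul_apply, Finset.sum_add_distrib,
      ← Finset.mul_sum, hM]
    linear_combination phi i * row_sum_parts hW i

lemma jointMatrix_inr_inr_pos {W M : Matrix (Fin n) (Fin n) ℝ} {phi : Fin n → ℝ}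
    (hW : ∀ i j, 0 ≤ W i j) (hMW : ∀ i j, 0 < M i j ↔ 0 < W i j)
    (hphi : ∀ i, phi i ∈ Set.Ioo (0 : ℝ) 1) {i j : Fin n} (h : 0 < W i j) :
    0 < jointMatrix W M phi (Sum.inr i) (Sum.inr j) := by
  simp only [jointMatrix, Matrix.fromBlocks_apply₂₂, Matrix.add_apply, Matrix.diagonal_mul,
    one_sub_diagonal_mul_apply]
  exact add_pos_of_nonneg_of_pos (mul_nonneg (hphi i).1.le (offDiagPart_nonneg hW i j))
    (mul_pos (sub_pos.2 (hphi i).2) ((hMW i j).2 h))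

lemma mul_pow_pos {ι : Type*} [Fintype ι] [DecidableEq ι] {P : Matrix ι ι ℝ}
    (hP : ∀ i j, 0 ≤ P i j) {m : ℕ} {i l j : ι} (h1 : 0 < P i l) (h2 : 0 < (P ^ m) l j) :
    0 < (P ^ (m + 1)) i j := by
  rw [pow_succ', Matrix.mul_apply]
  exact Finset.sum_pos' (fun s _ => mul_nonneg (hP i s) (pow_nonneg_of_nonneg hP m s j))
    ⟨l, Finset.mem_univ l, mul_pos h1 h2⟩

/-- Walks along the support of `W` lift to walks among the expressed opinions. -/
lemma jointMatrix_pow_inr_inr_pos {W M : Matrix (Fin n) (Fin n) ℝ} {phi : Fin n → ℝ}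
    (hW : ∀ i j, 0 ≤ W i j) (hM : ∀ i j, 0 ≤ M i j) (hMW : ∀ i j, 0 < M i j ↔ 0 < W i j)
    (hphi : ∀ i, phi i ∈ Set.Ioo (0 : ℝ) 1) (m : ℕ) :
    ∀ i j, 0 < (W ^ m) i j → 0 < (jointMatrix W M phi ^ m) (Sum.inr i) (Sum.inr j) := by
  induction m with
  | zero =>
    intro i j h
    rcases eq_or_ne i j with rfl | hij
    · simp
    · simp [Matrix.one_apply_ne hij] at h
  | succ m ih =>
    intro i j h
    rw [pow_succ', Matrix.mul_apply] at h
    obtain ⟨l, -, hl⟩ := Finset.exists_lt_of_sum_lt (s := Finset.univ) (f := fun _ => (0 : ℝ))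
      (by simpa using h)
    have h1 : 0 < W i l := (hW i l).lt_of_ne fun h0 => by simp [← h0] at hl
    exact mul_pow_pos (jointMatrix_nonneg hW hM hphi) (jointMatrix_inr_inr_pos hW hMW hphi h1)
      (ih l j (pos_of_mul_pos_right hl h1.le))

/-- A walk ending at `i` from elsewhere enters `i` through an edge that is not a loop. -/
lemma exists_ne_pos {W : Matrix (Fin n) (Fin n) ℝ} {i j : Fin n} (hji : j ≠ i)
    (h : Relation.TransGen (fun a b => 0 < W b a) j i) : ∃ l, l ≠ i ∧ 0 < W i l := by
  induction h using Relation.TransGen.head_induction_on with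
  | @single a hab => exact ⟨a, hji, hab⟩
  | @head a c hac _ ih =>
    rcases eq_or_ne c i with rfl | hc
    · exact ⟨a, hji, hac⟩
    · exact ih hc

lemma jointMatrix_pow_pos {W M : Matrix (Fin n) (Fin n) ℝ} {phi : Fin n → ℝ}
    (hW : ∀ i j, 0 ≤ W i j) (hM : ∀ i j, 0 ≤ M i j) (hMW : ∀ i j, 0 < M i j ↔ 0 < W i j)
    (hphi : ∀ i, phi i ∈ Set.Ioo (0 : ℝ) 1) (hnbr : ∀ i, ∃ l, l ≠ i ∧ 0 < W i l) {k : ℕ}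
    (hk : ∀ i j, 0 < (W ^ k) i j) (i : Fin n ⊕ Fin n) (j : Fin n) :
    0 < (jointMatrix W M phi ^ (k + 1)) i (Sum.inr j) := by
  have hlift := jointMatrix_pow_inr_inr_pos hW hM hMW hphi k
  have hnn := jointMatrix_nonneg hW hM hphi
  rcases i with i | i
  all_goals obtain ⟨l, hli, hl⟩ := hnbr i
  · have h1 : 0 < jointMatrix W M phi (Sum.inl i) (Sum.inr l) := by
      simpa [jointMatrix, offDiagPart_apply_of_ne W hli.symm] using hl
    exact mul_pow_pos hnn h1 (hlift l j (hk l j))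
  · exact mul_pow_pos hnn (jointMatrix_inr_inr_pos hW hMW hphi hl) (hlift l j (hk l j))

lemma opinions_succ (W M : Matrix (Fin n) (Fin n) ℝ) (phi y0 : Fin n → ℝ) (t : ℕ) :
    Sum.elim (opinionsConsensus W M phi y0 (t + 1)).1 (opinionsConsensus W M phi y0 (t + 1)).2 =
      jointMatrix W M phi *ᵥ
        Sum.elim (opinionsConsensus W M phi y0 t).1 (opinionsConsensus W M phi y0 t).2 := by
  rw [jointMatrix, Matrix.fromBlocks_mulVec]
  simp only [opinionsConsensus, Sum.elim_comp_inl, Sum.elim_comp_inr, Matrix.mulVec_add,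
    Matrix.add_mulVec, Matrix.mulVec_mulVec, add_assoc]

end Joint

/-- When every `λ_i = 1`, for every initial condition both
private and expressed opinions converge exponentially fast to a common
consensus vector `α·1`. -/
theorem stmt_7 {n : ℕ} (hn : 2 ≤ n) (W M : Matrix (Fin n) (Fin n) ℝ)
    (hWnn : ∀ i j, 0 ≤ W i j) (hWrow : ∀ i, ∑ j, W i j = 1)
    (hWirr : ∀ i j, i ≠ j → Relation.TransGen (fun a b => 0 < W b a) i j)
    (hWprim : ∃ k : ℕ, 0 < k ∧ ∀ i j, 0 < (W ^ k) i j)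
    (hMnn : ∀ i j, 0 ≤ M i j) (hMrow : ∀ i, ∑ j, M i j = 1)
    (hMW : ∀ i j, 0 < M i j ↔ 0 < W i j)
    (phi : Fin n → ℝ)
    (hphi : ∀ i, phi i ∈ Set.Ioo (0 : ℝ) 1) :
    ∀ y0 : Fin n → ℝ, ∃ α : ℝ, ∃ C : ℝ, 0 < C ∧
      ∃ r : ℝ, r ∈ Set.Ioo (0 : ℝ) 1 ∧
        ∀ t : ℕ,
          ‖(opinionsConsensus W M phi y0 t).1 - (fun _ => α)‖ ≤ C * r ^ t ∧
          ‖(opinionsConsensus W M phi y0 t).2 - (fun _ => α)‖ ≤ C * r ^ t := by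
  intro y0
  obtain ⟨k, -, hk⟩ := hWprim
  have : Nontrivial (Fin n) := Fin.nontrivial_iff_two_le.2 hn
  have hnbr : ∀ i, ∃ l, l ≠ i ∧ 0 < W i l := fun i => by
    obtain ⟨j, hj⟩ := exists_ne i
    exact exists_ne_pos hj (hWirr j i hj)
  obtain ⟨α, C, hC, r, hr, h⟩ := exists_geometric_consensus
    (jointMatrix_nonneg hWnn hMnn hphi) (jointMatrix_row_sum phi hWrow hMrow) k.succ_pos
    (j₀ := Sum.inr ⟨0, by omega⟩) (fun i => jointMatrix_pow_pos hWnn hMnn hMW hphi hnbr hk i _)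
    (fun t => Sum.elim (opinionsConsensus W M phi y0 t).1 (opinionsConsensus W M phi y0 t).2)
    (opinions_succ W M phi y0)
  refine ⟨α, C, hC, r, hr, fun t => ?_⟩
  have hCr : 0 ≤ C * r ^ t := mul_nonneg hC.le (pow_nonneg hr.1.le t)
  exact ⟨(pi_norm_le_iff_of_nonneg hCr).2 fun i => h t (Sum.inl i),
    (pi_norm_le_iff_of_nonneg hCr).2 fun i => h t (Sum.inr i)⟩
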